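/- Let Ω ⊂ ℝ² be a bounded Lipschitz x₁-connected domain. Let u ∈ BV(Ω;ℝ²) be of the form u(x) = R(x₂)x + ψ(x₂) for a.e. x ∈ Ω, with R ∈ BV(a_Ω,b_Ω;SO(2)) and ψ ∈ BV(a_Ω,b_Ω;ℝ²). Then there exists a sequence (u_ε)_ε ⊂ W^{1,1}(Ω;ℝ²) with ∇u_ε(x) ∈ SO(2) for a.e. x ∈ εY_rig ∩ Ω for every ε, such that u_ε converges weakly* to u in BV(Ω;ℝ²). -/

import Mathlib

open MeasureTheory Set Filter Topology
open scoped ENNReal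

noncomputable section

/-- We identify `ℝ²` with maps `Fin 2 → ℝ`; `x 0` is the `x₁` coordinate and
`x 1` the `x₂` coordinate. -/
abbrev V2 := Fin 2 → ℝ

/-- `2 × 2` real matrices. -/
abbrev Mat2 := Matrix (Fin 2) (Fin 2) ℝ

/-- Proper rotations: `SO(2) = {R : R Rᵀ = 1, det R = 1}`. -/
def SO2 : Set Mat2 := {R | R * R.transpose = 1 ∧ R.det = 1}

def e1 : V2 := ![1, 0]
def e2 : V2 := ![0, 1]

/-- Euclidean norm on `ℝ²`. -/
def vnorm (v : V2) : ℝ := Real.sqrt (v 0 ^ 2 + v 1 ^ 2)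

/-- Frobenius norm on `2 × 2` matrices. -/
def mnorm (M : Mat2) : ℝ := Real.sqrt (∑ i, ∑ j, M i j ^ 2)

/-- Euclidean inner product on `ℝ²`. -/
def dot (v w : V2) : ℝ := ∑ i, v i * w i

/-- Tensor (outer) product `a ⊗ b = a bᵀ` of two vectors. -/
def outer (a b : V2) : Mat2 := Matrix.of fun i j => a i * b j

/-- Identification of `ℝ²` with the Euclidean space `EuclideanSpace ℝ (Fin 2)`. -/
def vToE (v : V2) : EuclideanSpace ℝ (Fin 2) := (EuclideanSpace.equiv (Fin 2) ℝ).symm v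

/-- Identification of `2×2` matrices with `EuclideanSpace ℝ (Fin 2 × Fin 2)`
(so that the induced norm is the Frobenius norm). -/
def mToE (M : Mat2) : EuclideanSpace ℝ (Fin 2 × Fin 2) :=
  (EuclideanSpace.equiv (Fin 2 × Fin 2) ℝ).symm fun p => M p.1 p.2

/-- A vector-valued function of one real variable has bounded variation on `s`
(with respect to the Euclidean norm). -/
def BVv (ψ : ℝ → V2) (s : Set ℝ) : Prop := BoundedVariationOn (fun t => vToE (ψ t)) s

/-- A matrix-valued function of one real variable has bounded variation on `s`
(with respect to the Frobenius norm). -/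
def BVm (R : ℝ → Mat2) (s : Set ℝ) : Prop := BoundedVariationOn (fun t => mToE (R t)) s

/-- Componentwise (a.e. pointwise) derivative of a vector-valued function of one variable.
For a one-dimensional `BV` function, the classical derivative exists a.e. and coincides with
the density of the absolutely continuous part of its distributional derivative
(the approximate derivative). -/
def vecDeriv (ψ : ℝ → V2) (t : ℝ) : V2 := fun i => deriv (fun s => ψ s i) t

/-- Componentwise derivative of a matrix-valued function of one variable. -/
def mDeriv (R : ℝ → Mat2) (t : ℝ) : Mat2 := Matrix.of fun i j => deriv (fun s => R s i j) t

/-- The rigid layers `ε Y_rig = {x : Int.fract (x₂/ε) ∈ [λ, 1)}` (1-periodic extension of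
`[0,1) × [λ,1)`, scaled by `ε`). -/
def rigid2 (lam ε : ℝ) : Set V2 := {x | lam ≤ Int.fract (x 1 / ε)}

/-- The one-dimensional rigid layers `ε I_rig`, where `I_rig` is the 1-periodic extension
of `[λ, 1)`. -/
def rigid1 (lam ε : ℝ) : Set ℝ := {t | lam ≤ Int.fract (t / ε)}

/-- `a_Ω = inf_{x ∈ Ω} x₂`. -/
def aOm (Ω : Set V2) : ℝ := sInf ((fun x : V2 => x 1) '' Ω)

/-- `b_Ω = sup_{x ∈ Ω} x₂`. -/
def bOm (Ω : Set V2) : ℝ := sSup ((fun x : V2 => x 1) '' Ω)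

/-- `Ω` is `x₁`-connected: every horizontal slice is a (possibly empty) interval. -/
def X1Connected (Ω : Set V2) : Prop := ∀ t : ℝ, OrdConnected {s : ℝ | ![s, t] ∈ Ω}

/-- A (nonempty) bounded Lipschitz domain: near every boundary point, after a rotation,
`Ω` is the region above the graph of a Lipschitz function. -/
def IsLipschitzDomain (Ω : Set V2) : Prop :=
  IsOpen Ω ∧ Ω.Nonempty ∧ Bornology.IsBounded Ω ∧
    ∀ x ∈ frontier Ω, ∃ Q ∈ SO2, ∃ L : NNReal, ∃ f : ℝ → ℝ, ∃ r : ℝ, 0 < r ∧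
      LipschitzWith L f ∧ ∀ y ∈ Metric.ball x r, (y ∈ Ω ↔ f (Q.mulVec y 0) < Q.mulVec y 1)

/-- Partial derivative `∂_j φ` of a scalar test function. -/
def pd (j : Fin 2) (φ : V2 → ℝ) (x : V2) : ℝ := fderiv ℝ φ x (Pi.single j 1)

/-- Componentwise integrability of a matrix-valued map. -/
def IntegrableOnM (g : V2 → Mat2) (Ω : Set V2) : Prop :=
  ∀ i j, IntegrableOn (fun x => g x i j) Ω volume

/-- `u ∈ W^{1,1}(Ω;ℝ²)` with weak gradient `gu`, expressed through integration by parts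
against smooth compactly supported test functions. -/
structure IsSobolev11On (Ω : Set V2) (u : V2 → V2) (gu : V2 → Mat2) : Prop where
  int_u : IntegrableOn u Ω volume
  int_gu : IntegrableOnM gu Ω
  ibp : ∀ φ : V2 → ℝ, ContDiff ℝ (⊤ : ℕ∞) φ → HasCompactSupport φ → tsupport φ ⊆ Ω →
    ∀ i j, ∫ x in Ω, u x i * pd j φ x = - ∫ x in Ω, φ x * gu x i j

/-- `u ∈ BV(Ω;ℝ²)`, with distributional derivative `Du = gu · L² + gs · σ`.
Here `gu` is the approximate differential (density of the absolutely continuous part),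
`σ = |D^s u|` is the total variation measure of the singular part (a finite measure,
concentrated on `Ω` and singular with respect to Lebesgue measure), and `gs` is the
polar density of the singular part, of unit Frobenius norm `σ`-a.e. -/
structure HasBVDerivOn (Ω : Set V2) (u : V2 → V2) (gu : V2 → Mat2)
    (σ : Measure V2) (gs : V2 → Mat2) : Prop where
  int_u : IntegrableOn u Ω volume
  int_gu : IntegrableOnM gu Ω
  fin : σ Set.univ ≠ ⊤
  conc : σ Ωᶜ = 0
  perp : σ ⟂ₘ (volume : Measure V2)
  meas_gs : ∀ i j, AEMeasurable (fun x => gs x i j) σ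
  unit : ∀ᵐ x ∂σ, mnorm (gs x) = 1
  ibp : ∀ φ : V2 → ℝ, ContDiff ℝ (⊤ : ℕ∞) φ → HasCompactSupport φ → tsupport φ ⊆ Ω →
    ∀ i j, ∫ x in Ω, u x i * pd j φ x
        = (- ∫ x in Ω, φ x * gu x i j) - ∫ x, φ x * gs x i j ∂σ

/-- `L¹(Ω;ℝ²)` convergence of a sequence. -/
def L1ConvOn (Ω : Set V2) (un : ℕ → V2 → V2) (u : V2 → V2) : Prop :=
  Tendsto (fun n => ∫ x in Ω, vnorm (un n x - u x)) atTop (𝓝 0)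

/-- Weak* convergence of the measures `gn n · L²∟Ω` to `gu · L²∟Ω + gs · σ`
in `M(Ω; ℝ^{2×2})`, tested against continuous functions compactly supported in `Ω`. -/
def MeasConv (Ω : Set V2) (gn : ℕ → V2 → Mat2) (gu : V2 → Mat2)
    (σ : Measure V2) (gs : V2 → Mat2) : Prop :=
  ∀ φ : V2 → ℝ, Continuous φ → HasCompactSupport φ → tsupport φ ⊆ Ω → ∀ i j,
    Tendsto (fun n => ∫ x in Ω, φ x * gn n x i j) atTop
      (𝓝 ((∫ x in Ω, φ x * gu x i j) + ∫ x, φ x * gs x i j ∂σ))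

/-- Weak* convergence in `BV(Ω;ℝ²)` of a sequence of `W^{1,1}` maps to a `BV` limit:
`L¹` convergence together with weak* convergence of the derivative measures. -/
def WeakStarToBV (Ω : Set V2) (un : ℕ → V2 → V2) (u : V2 → V2) : Prop :=
  ∃ gu σ gs, HasBVDerivOn Ω u gu σ gs ∧ L1ConvOn Ω un u ∧
    ∀ gn : ℕ → V2 → Mat2, (∀ n, IsSobolev11On Ω (un n) (gn n)) → MeasConv Ω gn gu σ gs

/-- `u ∈ A_ε`, witnessed by the data `R ∈ L^∞(Ω;SO(2))` and `γ ∈ L¹(Ω)`: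
`u ∈ W^{1,1}(Ω;ℝ²)` with `∇u = R (I + γ e₁⊗e₂)` a.e. and `γ = 0` a.e. on `εY_rig ∩ Ω`. -/
structure MemAeps (Ω : Set V2) (lam ε : ℝ) (u : V2 → V2)
    (R : V2 → Mat2) (γ : V2 → ℝ) : Prop where
  so2 : ∀ᵐ x ∂(volume.restrict Ω), R x ∈ SO2
  int_γ : IntegrableOn γ Ω volume
  sob : IsSobolev11On Ω u fun x => R x * (1 + γ x • outer e1 e2)
  rig : ∀ᵐ x ∂(volume.restrict (Ω ∩ rigid2 lam ε)), γ x = 0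

/-- The elastoplastic energy `E_ε(u) = ∫_Ω |γ| dx` for `u ∈ A_ε`, `∞` otherwise,
as an `ℝ≥0∞`-valued functional (the decomposition data is essentially unique). -/
def Eeps (Ω : Set V2) (lam ε : ℝ) (u : V2 → V2) : ℝ≥0∞ :=
  sInf {c | ∃ R γ, MemAeps Ω lam ε u R γ ∧ c = ∫⁻ x in Ω, ENNReal.ofReal |γ x|}

/-- `u ∈ A` relative to the vertical interval `(a, b)`:
`u ∈ BV(Ω;ℝ²)` with `u(x) = R(x₂)x + ψ(x₂)` a.e., `R ∈ BV(a,b;SO(2))`,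
`ψ ∈ BV(a,b;ℝ²)` and `det ∇u = 1` a.e. in `Ω`. -/
def memAOn (Ω : Set V2) (a b : ℝ) (u : V2 → V2) : Prop :=
  ∃ gu σ gs, HasBVDerivOn Ω u gu σ gs ∧
    (∃ R : ℝ → Mat2, ∃ ψ : ℝ → V2, (∀ t ∈ Ioo a b, R t ∈ SO2) ∧
      BVm R (Ioo a b) ∧ BVv ψ (Ioo a b) ∧
      ∀ᵐ x ∂(volume.restrict Ω), u x = (R (x 1)).mulVec x + ψ (x 1)) ∧
    ∀ᵐ x ∂(volume.restrict Ω), (gu x).det = 1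

/-- `u ∈ A`. -/
def memA (Ω : Set V2) (u : V2 → V2) : Prop := memAOn Ω (aOm Ω) (bOm Ω) u

/-- `u ∈ A∥` relative to the vertical interval `(a,b)`:
`u(x) = Rx + ϑ(x₂) R e₁ + c` a.e. with a constant rotation `R ∈ SO(2)`,
`ϑ ∈ BV(a,b)` and `c ∈ ℝ²`. -/
def memAparOn (Ω : Set V2) (a b : ℝ) (u : V2 → V2) : Prop :=
  ∃ R ∈ SO2, ∃ ϑ : ℝ → ℝ, ∃ c : V2, BoundedVariationOn ϑ (Ioo a b) ∧
    ∀ᵐ x ∂(volume.restrict Ω), u x = R.mulVec x + ϑ (x 1) • R.mulVec e1 + c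

/-- `u ∈ A∥`. -/
def memApar (Ω : Set V2) (u : V2 → V2) : Prop := memAparOn Ω (aOm Ω) (bOm Ω) u

/-- The limit energy `E(u) = ∫_Ω |ψ'·Re₁| dx + |D^s u|(Ω)` for `u ∈ A`, `∞` otherwise. -/
def Efun (Ω : Set V2) (u : V2 → V2) : ℝ≥0∞ :=
  sInf {c | ∃ gu σ gs, HasBVDerivOn Ω u gu σ gs ∧
    ∃ R : ℝ → Mat2, ∃ ψ : ℝ → V2,
      (∀ t ∈ Ioo (aOm Ω) (bOm Ω), R t ∈ SO2) ∧ BVm R (Ioo (aOm Ω) (bOm Ω)) ∧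
      BVv ψ (Ioo (aOm Ω) (bOm Ω)) ∧
      (∀ᵐ x ∂(volume.restrict Ω), u x = (R (x 1)).mulVec x + ψ (x 1)) ∧
      (∀ᵐ x ∂(volume.restrict Ω), (gu x).det = 1) ∧
      c = (∫⁻ x in Ω, ENNReal.ofReal |dot (vecDeriv ψ (x 1)) ((R (x 1)).mulVec e1)|)
          + σ Set.univ}

/-- The limit energy on `A∥`: `E(u) = ∫_Ω |ϑ'(x₂)| dx + |D^s u|(Ω)` for `u ∈ A∥`,
`∞` otherwise. -/
def EparFun (Ω : Set V2) (u : V2 → V2) : ℝ≥0∞ :=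
  sInf {c | ∃ gu σ gs, HasBVDerivOn Ω u gu σ gs ∧
    ∃ R ∈ SO2, ∃ ϑ : ℝ → ℝ, ∃ c0 : V2, BoundedVariationOn ϑ (Ioo (aOm Ω) (bOm Ω)) ∧
      (∀ᵐ x ∂(volume.restrict Ω), u x = R.mulVec x + ϑ (x 1) • R.mulVec e1 + c0) ∧
      c = (∫⁻ x in Ω, ENNReal.ofReal |deriv ϑ (x 1)|) + σ Set.univ}

/-- The regularized limit energy `E^δ(u) = ∫_Ω |ϑ'| dx + |D^s u|(Ω) + δ|Ω|` on `A∥`,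
`∞` otherwise. -/
def EDelta (Ω : Set V2) (δ : ℝ) (u : V2 → V2) : ℝ≥0∞ :=
  EparFun Ω u + ENNReal.ofReal δ * volume Ω

/-- `‖v‖_{W^{1,p}(Ω;ℝ²)}^p = ∫_Ω |v|^p + ∫_Ω |Dv|^p` for a map `v` with weak Jacobian `G`. -/
def Wp1 (p : ℝ) (Ω : Set V2) (v : V2 → V2) (G : V2 → Mat2) : ℝ≥0∞ :=
  (∫⁻ x in Ω, ENNReal.ofReal (vnorm (v x) ^ p)) + ∫⁻ x in Ω, ENNReal.ofReal (mnorm (G x) ^ p)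

/-- The regularized energy
`E^δ_ε(u) = ∫_Ω |γ| dx + δ ‖∂₁ u‖_{W^{1,p}(Ω;ℝ²)}^p` for `u ∈ A_ε` with
`∂₁u = R e₁ ∈ W^{1,p}(Ω;ℝ²)`, and `∞` otherwise. -/
def EepsDelta (Ω : Set V2) (lam ε δ p : ℝ) (u : V2 → V2) : ℝ≥0∞ :=
  sInf {c | ∃ R γ, MemAeps Ω lam ε u R γ ∧
    ∃ G : V2 → Mat2, IsSobolev11On Ω (fun x => (R x).mulVec e1) G ∧
      c = (∫⁻ x in Ω, ENNReal.ofReal |γ x|) +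
          ENNReal.ofReal δ * Wp1 p Ω (fun x => (R x).mulVec e1) G}

/-- `x` is an approximate jump point of `u`, with one-sided approximate limits `a ≠ b`
relative to a unit normal `ν`. -/
def JumpPt (u : V2 → V2) (x : V2) : Prop :=
  ∃ a b ν : V2, a ≠ b ∧ vnorm ν = 1 ∧
    Tendsto (fun r : ℝ =>
        (∫⁻ z in {z | z ∈ Metric.ball x r ∧ 0 < dot (z - x) ν},
            ENNReal.ofReal (vnorm (u z - a))) / volume (Metric.ball x r))
      (𝓝[>] 0) (𝓝 0) ∧
    Tendsto (fun r : ℝ =>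
        (∫⁻ z in {z | z ∈ Metric.ball x r ∧ dot (z - x) ν < 0},
            ENNReal.ofReal (vnorm (u z - b))) / volume (Metric.ball x r))
      (𝓝[>] 0) (𝓝 0)

/-- The jump set `J_u` of `u` in `Ω`. -/
def jumpSet (Ω : Set V2) (u : V2 → V2) : Set V2 := {x ∈ Ω | JumpPt u x}

/-- `u ∈ SBV_∞(Ω;ℝ²)`: `u ∈ BV` with singular part concentrated on the jump set
(no Cantor part), `∇u ∈ L^∞(Ω;ℝ^{2×2})` and `H¹(J_u) < ∞`. -/
def memSBVinf (Ω : Set V2) (u : V2 → V2) : Prop :=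
  ∃ gu σ gs, HasBVDerivOn Ω u gu σ gs ∧
    σ {x | ¬ JumpPt u x} = 0 ∧
    (∃ M : ℝ, ∀ᵐ x ∂(volume.restrict Ω), mnorm (gu x) ≤ M) ∧
    Measure.hausdorffMeasure (1 : ℝ) (jumpSet Ω u) ≠ ⊤

/-- Piecewise constant functions on `(a,b)` with finitely many jumps
(the class `PC(a,b)`). -/
def PCOn {α : Type*} (a b : ℝ) (f : ℝ → α) : Prop :=
  ∃ S : Finset ℝ, ∀ s₁ ∈ Ioo a b, ∀ s₂ ∈ Ioo a b, s₁ ≤ s₂ →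
    (∀ r ∈ S, r ∉ Icc s₁ s₂) → f s₁ = f s₂

/-- Piecewise Lipschitz functions on `(a,b)` with finitely many jump points:
the class `SBV_∞(a,b;ℝ²)` of one-dimensional special functions of bounded variation
with bounded derivative and finitely many jumps. -/
def PLipOn (a b : ℝ) (f : ℝ → V2) : Prop :=
  ∃ S : Finset ℝ, ∃ L : ℝ, 0 ≤ L ∧ ∀ s₁ ∈ Ioo a b, ∀ s₂ ∈ Ioo a b, s₁ ≤ s₂ →
    (∀ r ∈ S, r ∉ Icc s₁ s₂) → vnorm (f s₂ - f s₁) ≤ L * (s₂ - s₁)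

/-- The rectangle `Ω = (0,1) × (−1,1)`. -/
def Rect : Set V2 := {x | x 0 ∈ Ioo (0:ℝ) 1 ∧ x 1 ∈ Ioo (-1:ℝ) 1}

/-- `f ∈ W^{1,1}(a,b)`: `f` has an integrable weak derivative on `(a,b)`
(absolutely continuous representative). -/
def IsW11On (f : ℝ → ℝ) (a b : ℝ) : Prop :=
  ∃ g : ℝ → ℝ, IntegrableOn g (Ioo a b) volume ∧
    ∀ s ∈ Ioo a b, ∀ t ∈ Ioo a b, f t - f s = ∫ r in s..t, g r

/-! ### One-dimensional interpolation -/

/-- Ramp function: `0` for `y ≤ 0`, `1` for `y ≥ lam`, linear in between. -/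
def Sr (lam y : ℝ) : ℝ := max 0 (min 1 (y / lam))

/-- Layered interpolation of a sequence `p`. -/
def Fl (lam : ℝ) (p : ℕ → ℝ) (M : ℕ) (y : ℝ) : ℝ :=
  p 0 + ∑ j ∈ Finset.range M, (p (j + 1) - p j) * Sr lam (y - (j + 1))

lemma Sr_one {lam y : ℝ} (hl : 0 < lam) (h : lam ≤ y) : Sr lam y = 1 := by
  have : 1 ≤ y / lam := by rwa [le_div_iff₀ hl, one_mul]
  simp [Sr, this]

lemma Sr_zero {lam y : ℝ} (hl : 0 < lam) (h : y ≤ 0) : Sr lam y = 0 := by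
  have : y / lam ≤ 0 := div_nonpos_of_nonpos_of_nonneg h hl.le
  rw [Sr, max_eq_left]
  exact (min_le_right _ _).trans this

lemma Sr_mid {lam y : ℝ} (hl : 0 < lam) (h : 0 ≤ y) (h' : y ≤ lam) : Sr lam y = y / lam := by
  have h1 : 0 ≤ y / lam := by positivity
  have h2 : y / lam ≤ 1 := by rwa [div_le_iff₀ hl, one_mul]
  simp [Sr, h1, h2]

lemma Sr_mem (lam y : ℝ) : 0 ≤ Sr lam y ∧ Sr lam y ≤ 1 :=
  ⟨le_max_left _ _, max_le zero_le_one (min_le_left _ _)⟩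

lemma Fl_full {lam : ℝ} (hl : lam ∈ Ioo (0:ℝ) 1) (p : ℕ → ℝ) (k : ℕ) {y : ℝ}
    (hy : (k:ℝ) + 1 ≤ y) : Fl lam p k y = p k := by
  have : ∀ j ∈ Finset.range k, (p (j + 1) - p j) * Sr lam (y - (j + 1)) = p (j + 1) - p j := by
    intro j hj
    have : (j:ℝ) + 1 ≤ k := by exact_mod_cast Finset.mem_range.1 hj
    rw [Sr_one hl.1 (by linarith [hl.2]), mul_one]
  rw [Fl, Finset.sum_congr rfl this, Finset.sum_range_sub]
  ring

lemma Fl_eval {lam : ℝ} (hl : lam ∈ Ioo (0:ℝ) 1) (p : ℕ → ℝ) (k M : ℕ) (hM : k < M) {y : ℝ}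
    (hy : (k:ℝ) + 1 ≤ y) (hy' : y < (k:ℝ) + 2) :
    Fl lam p M y = p k + (p (k + 1) - p k) * Sr lam (y - (k + 1)) := by
  induction M, hM using Nat.le_induction with
  | base => 
    have := Fl_full hl p k hy
    simp only [Fl, Nat.succ_eq_add_one] at *
    rw [Finset.sum_range_succ, ← add_assoc, this]
  | succ M hM ih =>
    have h : (k:ℝ) + 1 ≤ M := by exact_mod_cast hM
    simp only [Fl] at *
    rw [Finset.sum_range_succ, ← add_assoc, ih, Sr_zero (y := y - ((M:ℝ) + 1)) hl.1 (by linarith)]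
    ring

lemma lip_sum {ι : Type*} (s : Finset ι) (f : ι → ℝ → ℝ) (h : ∀ i, ∃ K, LipschitzWith K (f i)) :
    ∃ K, LipschitzWith K (fun y => ∑ i ∈ s, f i y) := by
  classical
  induction s using Finset.induction_on with
  | empty => exact ⟨0, by simpa only [Finset.sum_empty] using LipschitzWith.const (0:ℝ)⟩
  | insert a s ha ih =>
    obtain ⟨K, hK⟩ := ih
    obtain ⟨K', hK'⟩ := h a
    refine ⟨K' + K, ?_⟩
    simp only [Finset.sum_insert ha]
    exact hK'.add hK

lemma Fl_lip (lam : ℝ) (p : ℕ → ℝ) (M : ℕ) (c d : ℝ) :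
    ∃ K, LipschitzWith K (fun t => Fl lam p M (t / c + d)) := by
  obtain ⟨K, hK⟩ := lip_sum (Finset.range M)
    (fun j t => (p (j + 1) - p j) * Sr lam ((t / c + d) - (j + 1))) (by
      intro j
      have h0 : ∃ K, LipschitzWith K (fun t : ℝ => ((t / c + d) - (j + 1)) / lam) := by
        refine ⟨‖(c * lam)⁻¹‖₊, LipschitzWith.of_dist_le_mul fun x y => ?_⟩
        rw [Real.dist_eq, Real.dist_eq, coe_nnnorm, Real.norm_eq_abs, ← abs_mul]
        apply le_of_eq
        congr 1
        rw [mul_inv]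
        ring
      obtain ⟨K, hK⟩ := h0
      refine ⟨‖p (j + 1) - p j‖₊ * K, ?_⟩
      have h1 : LipschitzWith K (fun t => Sr lam ((t / c + d) - (j + 1))) := by
        unfold Sr
        exact (hK.const_min 1).const_max 0
      have h2 : LipschitzWith ‖p (j + 1) - p j‖₊ (fun t : ℝ => (p (j + 1) - p j) * t) :=
        LipschitzWith.of_dist_le_mul fun x y => by
          rw [Real.dist_eq, Real.dist_eq, coe_nnnorm, Real.norm_eq_abs, ← abs_mul, mul_sub]
      exact h2.comp h1)
  refine ⟨0 + K, ?_⟩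
  unfold Fl
  exact (LipschitzWith.const (p 0)).add hK

/-- If `f` is affine on a right neighbourhood, its (junk-valued) derivative is the slope or `0`. -/
lemma deriv_right {f : ℝ → ℝ} {t c d : ℝ} (hd : t < d)
    (h : ∀ z ∈ Ico t d, f z = f t + c * (z - t)) : deriv f t = c ∨ deriv f t = 0 := by
  by_cases hf : DifferentiableAt ℝ f t
  · left
    have h1 : HasDerivWithinAt f (deriv f t) (Ici t) t := hf.hasDerivAt.hasDerivWithinAt
    have h2 : HasDerivAt (fun z => f t + c * (z - t)) c t := by
      simpa using (((hasDerivAt_id t).sub_const t).const_mul c).const_add (f t)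
    have h3 : HasDerivWithinAt f c (Ici t) t := by
      refine h2.hasDerivWithinAt.congr_of_eventuallyEq ?_ (by simp)
      filter_upwards [Ico_mem_nhdsGE hd] with z hz using h z hz
    exact (uniqueDiffWithinAt_Ici t).eq_deriv _ h1 h3
  · right
    exact deriv_zero_of_not_differentiableAt hf

/-- Monotone clamping of the real line into `(a,b)`. -/
def tau (a b : ℝ) (n : ℕ) (t : ℝ) : ℝ :=
  max (a + (b - a) / (2 * (n + 1))) (min (b - (b - a) / (2 * (n + 1))) t)

lemma tau_mono (a b : ℝ) (n : ℕ) : Monotone (tau a b n) := by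
  intro s t h
  unfold tau
  gcongr

lemma tau_mem {a b : ℝ} (hab : a < b) (n : ℕ) (t : ℝ) : tau a b n t ∈ Ioo a b := by
  have h1 : 0 < (b - a) / (2 * ((n:ℝ) + 1)) := div_pos (by linarith) (by positivity)
  have h2 : (b - a) / (2 * ((n:ℝ) + 1)) ≤ (b - a) / 2 := by
    apply div_le_div_of_nonneg_left (by linarith) (by norm_num)
    have : (0:ℝ) ≤ n := by positivity
    linarith
  unfold tau
  constructor
  · exact lt_max_of_lt_left (by linarith)
  · apply max_lt (by linarith)
    exact min_lt_of_left_lt (by linarith)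

lemma tau_tendsto {a b t : ℝ} (ht : t ∈ Ioo a b) {s : ℕ → ℝ} (hs : Tendsto s atTop (𝓝 t)) :
    Tendsto (fun n => tau a b n (s n)) atTop (𝓝 t) := by
  have h0 : Tendsto (fun n : ℕ => (b - a) / (2 * ((n:ℝ) + 1))) atTop (𝓝 0) := by
    have := (tendsto_one_div_add_atTop_nhds_zero_nat (𝕜 := ℝ)).const_mul ((b - a) / 2)
    rw [mul_zero] at this
    refine this.congr fun n => ?_
    field_simp
  have h1 : Tendsto (fun n => tau a b n (s n)) atTop (𝓝 (max (a + 0) (min (b - 0) t))) :=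
    (tendsto_const_nhds.add h0).max ((tendsto_const_nhds.sub h0).min hs)
  have : max (a + 0) (min (b - 0) t) = t := by
    rw [add_zero, sub_zero, min_eq_right ht.2.le, max_eq_right ht.1.le]
  rwa [this] at h1

/-- The offset used in the layer numbering. -/
def Nof (a b e : ℝ) : ℕ := ⌈(|a| + |b|) / e⌉₊ + 1

/-- The layered approximation of `g` at scale `e`. -/
def App (a b lam e : ℝ) (n : ℕ) (g : ℝ → ℝ) (t : ℝ) : ℝ :=
  Fl lam (fun j => g (tau a b n (e * ((j:ℝ) - Nof a b e)))) (2 * Nof a b e) (t / e + Nof a b e)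

lemma App_lip (a b lam e : ℝ) (n : ℕ) (g : ℝ → ℝ) : ∃ K, LipschitzWith K (App a b lam e n g) :=
  Fl_lip _ _ _ _ _

/-- Layer index. -/
lemma layer {a b e t : ℝ} (he : 0 < e) (ht : t ∈ Ioo a b) :
    ∃ k : ℕ, k < 2 * Nof a b e ∧ (k:ℝ) + 1 ≤ t / e + Nof a b e ∧
      t / e + Nof a b e < (k:ℝ) + 2 ∧
      Int.fract (t / e) = t / e + Nof a b e - (k + 1) := by
  set N := Nof a b e with hN
  have hN1 : (|a| + |b|) / e ≤ (N:ℝ) - 1 := by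
    rw [hN, Nof]; push_cast
    linarith [Nat.le_ceil ((|a| + |b|) / e)]
  have habs : |t| ≤ |a| + |b| := by
    rw [abs_le]
    constructor
    · linarith [ht.1, neg_abs_le a, abs_nonneg b]
    · linarith [ht.2, le_abs_self b, abs_nonneg a]
  have h1 : |t / e| ≤ (N:ℝ) - 1 := by
    rw [abs_div, abs_of_pos he]
    exact (div_le_div_of_nonneg_right habs he.le).trans hN1
  rw [abs_le] at h1
  set y := t / e + N with hy
  have hy1 : 1 ≤ y := by linarith
  have hy0 : 0 ≤ y := by linarith
  have hfl : 1 ≤ ⌊y⌋₊ := by rw [Nat.one_le_floor_iff]; exact hy1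
  obtain ⟨k, hk⟩ : ∃ k, ⌊y⌋₊ = k + 1 := ⟨⌊y⌋₊ - 1, by omega⟩
  have h2 : ((k:ℝ) + 1) ≤ y := by
    have := Nat.floor_le hy0; rw [hk] at this; exact_mod_cast this
  have h3 : y < (k:ℝ) + 2 := by
    have := Nat.lt_floor_add_one y; rw [hk] at this; push_cast at this; linarith
  refine ⟨k, ?_, h2, h3, ?_⟩
  · have : (k:ℝ) < ((2 * N : ℕ):ℝ) := by push_cast; linarith
    exact_mod_cast this
  · rw [show t / e = y - N by rw [hy]; ring, Int.fract_sub_natCast, Int.fract]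
    have : ⌊y⌋ = (k:ℤ) + 1 := by
      rw [Int.floor_eq_iff]; push_cast; constructor <;> linarith
    rw [this]; push_cast; ring

lemma App_approx {a b lam e t : ℝ} (hl : lam ∈ Ioo (0:ℝ) 1) (he : 0 < e) (ht : t ∈ Ioo a b)
    (n : ℕ) : ∃ s₁ s₂ : ℝ, |s₁ - t| ≤ 2 * e ∧ |s₂ - t| ≤ 2 * e ∧
      ∀ (g : ℝ → ℝ) (v : ℝ), |App a b lam e n g t - v| ≤
        |g (tau a b n s₁) - v| + |g (tau a b n s₂) - v| := by
  obtain ⟨k, hk, h1, h2, -⟩ := layer (a := a) (b := b) he ht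
  set N := Nof a b e with hN
  have key : t = e * (t / e) := by field_simp
  refine ⟨e * ((k:ℝ) - N), e * (((k + 1 : ℕ):ℝ) - N), ?_, ?_, ?_⟩
  · have : e * ((k:ℝ) - N) - t = e * (k - N - t / e) := by rw [mul_sub _ _ (t / e), ← key]
    rw [this, abs_mul, abs_of_pos he, mul_comm]
    gcongr
    rw [abs_le]; constructor <;> linarith
  · have : e * (((k + 1 : ℕ):ℝ) - N) - t = e * (k + 1 - N - t / e) := by
      rw [mul_sub _ _ (t / e), ← key]; push_cast; ring
    rw [this, abs_mul, abs_of_pos he, mul_comm]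
    gcongr
    rw [abs_le]; constructor <;> linarith
  · intro g v
    rw [App, ← hN, Fl_eval hl _ k _ hk h1 h2]
    set A := g (tau a b n (e * ((k:ℝ) - N)))
    set B := g (tau a b n (e * (((k + 1 : ℕ):ℝ) - N)))
    obtain ⟨hs0, hs1⟩ := Sr_mem lam (t / e + N - (k + 1))
    set s := Sr lam (t / e + N - (k + 1))
    have : A + (B - A) * s - v = (1 - s) * (A - v) + s * (B - v) := by ring
    rw [this]
    refine (abs_add_le _ _).trans ?_
    rw [abs_mul, abs_mul, abs_of_nonneg hs0, abs_of_nonneg (sub_nonneg.2 hs1)]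
    have := abs_nonneg (A - v)
    have := abs_nonneg (B - v)
    nlinarith

lemma App_deriv {a b lam e t : ℝ} (hl : lam ∈ Ioo (0:ℝ) 1) (he : 0 < e)
    {n : ℕ} {k : ℕ} (hk : k < 2 * Nof a b e) (h1 : (k:ℝ) + 1 ≤ t / e + Nof a b e)
    (h2 : t / e + Nof a b e < (k:ℝ) + 2) (g : ℝ → ℝ) :
    (lam ≤ t / e + Nof a b e - (k + 1) → 
      App a b lam e n g t = g (tau a b n (e * (((k + 1 : ℕ):ℝ) - Nof a b e))) ∧
      deriv (App a b lam e n g) t = 0) ∧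
    (t / e + Nof a b e - (k + 1) < lam →
      |deriv (App a b lam e n g) t| ≤ 
        |g (tau a b n (e * (((k + 1 : ℕ):ℝ) - Nof a b e))) -
          g (tau a b n (e * ((k:ℝ) - Nof a b e)))| / (e * lam)) := by
  set N := Nof a b e with hN
  have hmono : ∀ z, t ≤ z → t / e ≤ z / e := fun z hz => div_le_div_of_nonneg_right hz he.le
  have ev : ∀ z, t ≤ z → z / e + N < (k:ℝ) + 2 → App a b lam e n g z = 
      g (tau a b n (e * ((k:ℝ) - N))) + (g (tau a b n (e * (((k + 1 : ℕ):ℝ) - N))) -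
      g (tau a b n (e * ((k:ℝ) - N)))) * Sr lam (z / e + N - (k + 1)) := by
    intro z hz hz'
    rw [App, ← hN, Fl_eval hl _ k _ hk (by linarith [hmono z hz]) hz']
  set A := g (tau a b n (e * ((k:ℝ) - N)))
  set B := g (tau a b n (e * (((k + 1 : ℕ):ℝ) - N)))
  constructor
  · intro h
    have e1 : ∀ z, t ≤ z → z / e + N < (k:ℝ) + 2 → App a b lam e n g z = B := by
      intro z hz hz'
      rw [ev z hz hz', Sr_one hl.1 (by linarith [hmono z hz])]; ring
    refine ⟨e1 t le_rfl h2, ?_⟩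
    have := deriv_right (f := App a b lam e n g) (t := t) (c := 0) (d := e * ((k:ℝ) + 2 - N))
      (by rw [mul_comm, ← div_lt_iff₀ he]; linarith) (by
        intro z hz
        have hz2 := hz.2
        rw [mul_comm, ← div_lt_iff₀ he] at hz2
        rw [e1 z hz.1 (by linarith), e1 t le_rfl h2]; ring)
    tauto
  · intro h
    have e1 : ∀ z, t ≤ z → z / e + N < (k:ℝ) + 1 + lam → App a b lam e n g z = 
        A + (B - A) * ((z / e + N - (k + 1)) / lam) := by
      intro z hz hz'
      rw [ev z hz (by linarith [hl.2]), 
        Sr_mid hl.1 (by linarith [hmono z hz]) (by linarith)]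
    have := deriv_right (f := App a b lam e n g) (t := t) (c := (B - A) / (e * lam)) 
      (d := e * ((k:ℝ) + 1 + lam - N))
      (by rw [mul_comm, ← div_lt_iff₀ he]; linarith) (by
        intro z hz
        have hz2 := hz.2
        rw [mul_comm, ← div_lt_iff₀ he] at hz2
        rw [e1 z hz.1 (by linarith), e1 t le_rfl (by linarith)]
        have := hl.1
        field_simp
        ring)
    have hpos : 0 < e * lam := mul_pos he hl.1
    rcases this with h | h
    · rw [h, abs_div, abs_of_pos hpos]
    · rw [h, abs_zero]; positivity

lemma App_rigid {a b lam e t : ℝ} (hl : lam ∈ Ioo (0:ℝ) 1) (he : 0 < e) (ht : t ∈ Ioo a b)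
    (n : ℕ) (hr : lam ≤ Int.fract (t / e)) : ∃ s : ℝ, ∀ g : ℝ → ℝ,
      App a b lam e n g t = g (tau a b n s) ∧ deriv (App a b lam e n g) t = 0 := by
  obtain ⟨k, hk, h1, h2, h3⟩ := layer (a := a) (b := b) he ht
  exact ⟨_, fun g => (App_deriv hl he hk h1 h2 g).1 (h3 ▸ hr)⟩

/-- Uniform `L¹` bound for the derivative of the approximation. -/
lemma App_lintegral {a b lam e K : ℝ} (hl : lam ∈ Ioo (0:ℝ) 1) (he : 0 < e) (hab : a < b)
    (n : ℕ) (g : ℝ → ℝ) {Ω : Set V2} (hΩ : ∀ x ∈ Ω, x 1 ∈ Ioo a b ∧ |x 0| ≤ K)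
    (hm : MeasurableSet Ω) :
    ∫⁻ x in Ω, ENNReal.ofReal |deriv (App a b lam e n g) (x 1)| ≤
      ENNReal.ofReal (2 * K) * eVariationOn g (Ioo a b) := by
  set N := Nof a b e with hN
  set q : ℕ → ℝ := fun j => tau a b n (e * ((j:ℝ) - N)) with hq
  set lo : ℕ → ℝ := fun j => e * ((j:ℝ) + 1 - N) with hlo
  set box : ℕ → Set V2 := fun j => Icc ![-K, lo j] ![K, lo j + e * lam] with hbox
  have hel : 0 < e * lam := mul_pos he hl.1
  have hvol : ∀ j, volume (box j) = ENNReal.ofReal (2 * K) * ENNReal.ofReal (e * lam) := by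
    intro j
    rw [hbox, Real.volume_Icc_pi]
    simp [Fin.prod_univ_two]
    rw [← two_mul, ENNReal.ofReal_mul zero_le_two, ENNReal.ofReal_ofNat]
  have hpt : ∀ x ∈ Ω, ENNReal.ofReal |deriv (App a b lam e n g) (x 1)| ≤
      ∑ j ∈ Finset.range (2 * N), (box j).indicator
        (fun _ => ENNReal.ofReal (|g (q (j + 1)) - g (q j)| / (e * lam))) x := by
    intro x hx
    obtain ⟨ht, hx0⟩ := hΩ x hx
    obtain ⟨k, hk, h1, h2, -⟩ := layer (a := a) (b := b) he ht
    obtain ⟨hA, hB⟩ := App_deriv (n := n) hl he hk h1 h2 g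
    rcases le_or_gt lam (x 1 / e + Nof a b e - (k + 1)) with h | h
    · rw [(hA h).2]; simp
    · have hxb : x ∈ box k := by
        have : x 1 = e * (x 1 / e) := by field_simp
        rw [abs_le] at hx0
        simp only [hbox, hlo, mem_Icc, Pi.le_def, Fin.forall_fin_two]
        simp
        refine ⟨⟨hx0.1, ?_⟩, hx0.2, ?_⟩
        · rw [this]; gcongr; linarith
        · rw [this, ← mul_add]; gcongr; linarith
      refine le_trans ?_ (Finset.single_le_sum (f := fun j => (box j).indicator
        (fun _ => ENNReal.ofReal (|g (q (j + 1)) - g (q j)| / (e * lam))) x)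
        (fun _ _ => zero_le) (Finset.mem_range.2 hk))
      simp only [indicator_of_mem hxb]
      exact ENNReal.ofReal_le_ofReal (hB h)
  calc ∫⁻ x in Ω, ENNReal.ofReal |deriv (App a b lam e n g) (x 1)|
      ≤ ∫⁻ x in Ω, ∑ j ∈ Finset.range (2 * N), (box j).indicator
        (fun _ => ENNReal.ofReal (|g (q (j + 1)) - g (q j)| / (e * lam))) x :=
        setLIntegral_mono' hm hpt
    _ ≤ ∫⁻ x, ∑ j ∈ Finset.range (2 * N), (box j).indicator
        (fun _ => ENNReal.ofReal (|g (q (j + 1)) - g (q j)| / (e * lam))) x :=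
        setLIntegral_le_lintegral _ _
    _ = ∑ j ∈ Finset.range (2 * N), 
          ENNReal.ofReal (|g (q (j + 1)) - g (q j)| / (e * lam)) * volume (box j) := by
        rw [lintegral_finsetSum]
        · refine Finset.sum_congr rfl fun j _ => ?_
          rw [lintegral_indicator_const measurableSet_Icc]
        · intro j _
          exact measurable_const.indicator measurableSet_Icc
    _ = ENNReal.ofReal (2 * K) * ∑ j ∈ Finset.range (2 * N), edist (g (q (j + 1))) (g (q j)) := by
        rw [Finset.mul_sum]
        refine Finset.sum_congr rfl fun j _ => ?_
        rw [hvol, edist_dist, Real.dist_eq, mul_left_comm, ← ENNReal.ofReal_mul (by positivity)]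
        congr 2
        exact div_mul_cancel₀ _ hel.ne'
    _ ≤ ENNReal.ofReal (2 * K) * eVariationOn g (Ioo a b) := by
        gcongr
        apply eVariationOn.sum_le
        · intro i j hij
          apply tau_mono
          gcongr
        · intro i
          exact tau_mem hab _ _

/-! ### Sobolev maps of layered form -/

lemma pd_continuous {φ : V2 → ℝ} (hφ : ContDiff ℝ (⊤ : ℕ∞) φ) (j : Fin 2) :
    Continuous (pd j φ) := by
  have := hφ.continuous_fderiv (by simp)
  unfold pd
  fun_prop

lemma pd_support {φ : V2 → ℝ} (hc : HasCompactSupport φ) (j : Fin 2) :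
    HasCompactSupport (pd j φ) := hc.fderiv_apply ℝ _

lemma pd_zero {φ : V2 → ℝ} {x : V2} (hx : x ∉ tsupport φ) (j : Fin 2) : pd j φ x = 0 := by
  have : fderiv ℝ φ x = 0 := by
    by_contra h
    exact hx (support_fderiv_subset ℝ h)
  simp [pd, this]

lemma lineDeriv_layer (A : ℝ → ℝ) (x : V2) (j : Fin 2) :
    lineDeriv ℝ (fun x : V2 => A (x 1)) x (Pi.single j 1) = if j = 1 then deriv A (x 1) else 0 := by
  fin_cases j
  · simp [lineDeriv]
  · simp only [lineDeriv]
    simp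
    have := deriv_comp_const_add (f := A) (x 1) 0
    simpa using this

lemma ibp_prod {A : ℝ → ℝ} {K : NNReal} (hA : LipschitzWith K A) {w φ : V2 → ℝ}
    (hw : ContDiff ℝ (⊤ : ℕ∞) w) (hφ : ContDiff ℝ (⊤ : ℕ∞) φ) (hc : HasCompactSupport φ)
    (j : Fin 2) :
    ∫ x, A (x 1) * w x * pd j φ x = (- ∫ x, φ x * A (x 1) * pd j w x)
      - ∫ x, φ x * ((if j = 1 then deriv A (x 1) else 0) * w x) := by
  have hf : LipschitzWith (K * 1) (fun x : V2 => A (x 1)) := hA.comp (LipschitzWith.eval 1)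
  have hwφ : ContDiff ℝ (⊤ : ℕ∞) (fun x => w x * φ x) := hw.mul hφ
  have hcwφ : HasCompactSupport (fun x => w x * φ x) := hc.mul_left
  obtain ⟨D, hD⟩ := (hwφ.of_le (by simp : (1 : WithTop ℕ∞) ≤ _)).lipschitzWith_of_hasCompactSupport
    hcwφ (by simp)
  have key := hf.integral_lineDeriv_mul_eq (μ := volume) hD hcwφ (Pi.single j 1)
  have hld : ∀ x, lineDeriv ℝ (fun x => w x * φ x) x (-(Pi.single j 1)) =
      -(w x * pd j φ x + φ x * pd j w x) := by
    intro x
    have hdw : DifferentiableAt ℝ w x := (hw.differentiable (by simp)) x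
    have hdφ : DifferentiableAt ℝ φ x := (hφ.differentiable (by simp)) x
    rw [(hdw.fun_mul hdφ).lineDeriv_eq_fderiv, map_neg, fderiv_fun_mul hdw hdφ]
    simp [pd]
  simp only [lineDeriv_layer, hld] at key
  have hcA : Continuous (fun x : V2 => A (x 1)) := hf.continuous
  have i1 : Integrable (fun x : V2 => A (x 1) * w x * pd j φ x) := by
    apply Continuous.integrable_of_hasCompactSupport
    · exact (hcA.mul hw.continuous).mul (pd_continuous hφ j)
    · exact (pd_support hc j).mul_left
  have i2 : Integrable (fun x : V2 => φ x * A (x 1) * pd j w x) := by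
    apply Continuous.integrable_of_hasCompactSupport
    · exact (hφ.continuous.mul hcA).mul (pd_continuous hw j)
    · exact (hc.mul_right).mul_right
  have e1 : ∫ x : V2, -(w x * pd j φ x + φ x * pd j w x) * A (x 1) =
      -(∫ x, A (x 1) * w x * pd j φ x) - ∫ x, φ x * A (x 1) * pd j w x := by
    have i1' : Integrable (fun x : V2 => -(A (x 1) * w x * pd j φ x)) := i1.neg
    rw [← integral_neg, ← integral_sub i1' i2]
    congr 1
    ext x
    ring
  rw [e1] at key
  have e2 : ∫ x : V2, φ x * ((if j = 1 then deriv A (x 1) else 0) * w x) =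
      ∫ x : V2, (if j = 1 then deriv A (x 1) else 0) * (w x * φ x) := by
    congr 1
    ext x
    ring
  rw [e2, key]
  ring

/-- Layered map. -/
def U2 (A : Fin 2 → Fin 2 → ℝ → ℝ) (B : Fin 2 → ℝ → ℝ) (x : V2) : V2 :=
  fun i => A i 0 (x 1) * x 0 + A i 1 (x 1) * x 1 + B i (x 1)

/-- Gradient of a layered map. -/
def G2 (A : Fin 2 → Fin 2 → ℝ → ℝ) (B : Fin 2 → ℝ → ℝ) (x : V2) : Mat2 :=
  Matrix.of fun i j => A i j (x 1) + (if j = 1 then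
    deriv (A i 0) (x 1) * x 0 + deriv (A i 1) (x 1) * x 1 + deriv (B i) (x 1) else 0)

lemma lip_int {A : ℝ → ℝ} {K : NNReal} (hA : LipschitzWith K A) {Ω : Set V2}
    (hb : Bornology.IsBounded Ω) {w : V2 → ℝ} (hw : Continuous w) :
    IntegrableOn (fun x => A (x 1) * w x) Ω volume := by
  have : Continuous (fun x : V2 => A (x 1) * w x) :=
    (hA.continuous.comp (continuous_apply 1)).mul hw
  exact (this.continuousOn.integrableOn_compact hb.isCompact_closure).mono_set subset_closure

lemma lip_deriv_int {A : ℝ → ℝ} {K : NNReal} (hA : LipschitzWith K A) {Ω : Set V2}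
    (hb : Bornology.IsBounded Ω) {w : V2 → ℝ} (hw : Continuous w) :
    IntegrableOn (fun x => deriv A (x 1) * w x) Ω volume := by
  have h1 : IntegrableOn w Ω volume :=
    (hw.continuousOn.integrableOn_compact hb.isCompact_closure).mono_set subset_closure
  refine h1.bdd_mul (c := K) ?_ ?_
  · exact ((measurable_deriv A).comp (measurable_pi_apply 1)).aestronglyMeasurable
  · exact Eventually.of_forall fun x => norm_deriv_le_of_lipschitz hA

lemma setInt_eq {Ω : Set V2} {f : V2 → ℝ} {φ : V2 → ℝ} (ht : tsupport φ ⊆ Ω)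
    (h : ∀ x, x ∉ tsupport φ → f x = 0) : ∫ x in Ω, f x = ∫ x, f x :=
  setIntegral_eq_integral_of_forall_compl_eq_zero fun x hx => h x fun hx' => hx (ht hx')

lemma pd_const (c : ℝ) (j : Fin 2) (x : V2) : pd j (fun _ => c) x = 0 := by
  simp [pd]

lemma pd_coord (k j : Fin 2) (x : V2) : pd j (fun x => x k) x = if k = j then 1 else 0 := by
  have : HasFDerivAt (fun x : V2 => x k) (ContinuousLinearMap.proj (R := ℝ) k) x :=
    (ContinuousLinearMap.proj (R := ℝ) (φ := fun _ : Fin 2 => ℝ) k).hasFDerivAt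
  rw [pd, this.fderiv]
  simp [Pi.single_apply]

lemma sob_layer {A : Fin 2 → Fin 2 → ℝ → ℝ} {B : Fin 2 → ℝ → ℝ}
    (hA : ∀ i k, ∃ K, LipschitzWith K (A i k)) (hB : ∀ i, ∃ K, LipschitzWith K (B i))
    {Ω : Set V2} (hb : Bornology.IsBounded Ω) :
    IsSobolev11On Ω (U2 A B) (G2 A B) := by
  have cx : ∀ k : Fin 2, Continuous (fun x : V2 => x k) := fun k => continuous_apply k
  choose KA hKA using hA
  choose KB hKB using hB
  have c1 : Continuous (fun _ : V2 => (1:ℝ)) := continuous_const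
  have iA : ∀ i k (w : V2 → ℝ), Continuous w → 
      IntegrableOn (fun x => A i k (x 1) * w x) Ω volume := fun i k w hw => lip_int (hKA i k) hb hw
  have iB : ∀ i (w : V2 → ℝ), Continuous w → 
      IntegrableOn (fun x => B i (x 1) * w x) Ω volume := fun i w hw => lip_int (hKB i) hb hw
  have iA' : ∀ i k (w : V2 → ℝ), Continuous w → 
      IntegrableOn (fun x => deriv (A i k) (x 1) * w x) Ω volume :=
    fun i k w hw => lip_deriv_int (hKA i k) hb hw
  have iB' : ∀ i (w : V2 → ℝ), Continuous w → 
      IntegrableOn (fun x => deriv (B i) (x 1) * w x) Ω volume :=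
    fun i w hw => lip_deriv_int (hKB i) hb hw
  refine ⟨?_, ?_, ?_⟩
  · refine Integrable.of_eval fun i => ?_
    have := ((iA i 0 _ (cx 0)).add (iA i 1 _ (cx 1))).add (iB i _ c1)
    refine this.congr (Eventually.of_forall fun x => ?_)
    simp [U2]
  · intro i j
    have h1 := iA i j _ c1
    have h2 := ((iA' i 0 _ (cx 0)).add (iA' i 1 _ (cx 1))).add (iB' i _ c1)
    by_cases hj : j = 1
    · have := h1.add h2
      refine this.congr (Eventually.of_forall fun x => ?_)
      simp [G2, hj]
    · simpa [G2, hj] using h1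
  · intro φ hφ hc ht i j
    have cφ := hφ.continuous
    have cp := pd_continuous hφ j
    have P1 := ibp_prod (hKA i 0) (w := fun x => x 0) (contDiff_apply ℝ ℝ 0) hφ hc j
    have P2 := ibp_prod (hKA i 1) (w := fun x => x 1) (contDiff_apply ℝ ℝ 1) hφ hc j
    have P3 := ibp_prod (hKB i) (w := fun x => 1) contDiff_const hφ hc j
    have z : ∀ x, x ∉ tsupport φ → φ x = 0 := fun x hx => image_eq_zero_of_notMem_tsupport hx
    have s1 : ∀ f : V2 → ℝ, ∫ x in Ω, f x * pd j φ x = ∫ x, f x * pd j φ x := fun f =>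
      setInt_eq ht fun x hx => by rw [pd_zero hx, mul_zero]
    have s2 : ∀ f : V2 → ℝ, ∫ x in Ω, φ x * f x = ∫ x, φ x * f x := fun f =>
      setInt_eq ht fun x hx => by rw [z x hx, zero_mul]
    simp only [mul_assoc] at P1 P2 P3
    simp only [← mul_assoc (A _ _ _), ← mul_assoc (B _ _)] at P1 P2 P3
    rw [← s1, ← s2, ← s2] at P1 P2 P3
    have L : ∫ x in Ω, U2 A B x i * pd j φ x = 
        (∫ x in Ω, A i 0 (x 1) * x 0 * pd j φ x) + (∫ x in Ω, A i 1 (x 1) * x 1 * pd j φ x)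
        + ∫ x in Ω, B i (x 1) * 1 * pd j φ x := by
      have q1 := iA i 0 (fun x => x 0 * pd j φ x) ((cx 0).mul cp)
      have q2 := iA i 1 (fun x => x 1 * pd j φ x) ((cx 1).mul cp)
      have q3 := iB i (fun x => 1 * pd j φ x) (c1.mul cp)
      simp only [← mul_assoc] at q1 q2 q3
      have q12 : Integrable (fun x : V2 => A i 0 (x 1) * x 0 * pd j φ x + 
        A i 1 (x 1) * x 1 * pd j φ x) (volume.restrict Ω) := q1.add q2
      rw [← integral_add q1 q2, ← integral_add q12 q3]
      congr 1
      ext x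
      simp only [U2]
      ring
    rw [L, P1, P2, P3]
    have mulr : ∀ {f : V2 → ℝ}, IntegrableOn f Ω volume →
        IntegrableOn (fun x => φ x * f x) Ω volume := by
      intro f hf
      obtain ⟨C, hC⟩ := hc.exists_bound_of_continuous cφ
      exact hf.bdd_mul (c := C) cφ.aestronglyMeasurable (Eventually.of_forall hC)
    have a1 := mulr (iA i 0 (fun x => pd j (fun x => x 0) x) (by
      simp only [pd_coord]; exact continuous_const))
    have a2 := mulr (iA i 1 (fun x => pd j (fun x => x 1) x) (by
      simp only [pd_coord]; exact continuous_const))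
    have a3 := mulr (iB i (fun x => pd j (fun x => 1) x) (by
      simp only [pd_const]; exact continuous_const))
    have ite_int : ∀ {D : ℝ → ℝ} {w : V2 → ℝ}, IntegrableOn (fun x => D (x 1) * w x) Ω volume →
        IntegrableOn (fun x => φ x * ((if j = 1 then D (x 1) else 0) * w x)) Ω volume := by
      intro D w h
      apply mulr
      by_cases hj : j = 1
      · simpa [hj] using h
      · simp [hj]
    have b1 := ite_int (iA' i 0 _ (cx 0))
    have b2 := ite_int (iA' i 1 _ (cx 1))
    have b3 := ite_int (iB' i _ c1)
    have Rr : ∫ x in Ω, φ x * G2 A B x i j = 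
        (∫ x in Ω, φ x * (A i 0 (x 1) * pd j (fun x => x 0) x)) +
        (∫ x in Ω, φ x * ((if j = 1 then deriv (A i 0) (x 1) else 0) * x 0)) +
        ((∫ x in Ω, φ x * (A i 1 (x 1) * pd j (fun x => x 1) x)) +
        (∫ x in Ω, φ x * ((if j = 1 then deriv (A i 1) (x 1) else 0) * x 1))) +
        ((∫ x in Ω, φ x * (B i (x 1) * pd j (fun x => 1) x)) +
        (∫ x in Ω, φ x * ((if j = 1 then deriv (B i) (x 1) else 0) * 1))) := by
      rw [← integral_add a1 b1, ← integral_add a2 b2, ← integral_add a3 b3, 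
        ← integral_add (a1.fun_add b1) (a2.fun_add b2),
        ← integral_add ((a1.fun_add b1).fun_add (a2.fun_add b2)) (a3.fun_add b3)]
      congr 1
      ext x
      simp only [pd_coord, pd_const, G2, Matrix.of_apply]
      fin_cases j <;> simp <;> ring
    rw [Rr]
    ring

/-! ### Weak-star convergence -/

lemma int_diff_le {μ : Measure V2} {h φ φ' : V2 → ℝ} (hh : Integrable h μ)
    (c : Continuous φ) (c' : Continuous φ') (hc : HasCompactSupport φ) (hc' : HasCompactSupport φ')
    {δ : ℝ} (hd : ∀ x, dist (φ' x) (φ x) < δ) :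
    |(∫ x, φ x * h x ∂μ) - ∫ x, φ' x * h x ∂μ| ≤ δ * ∫ x, |h x| ∂μ := by
  have mulr : ∀ {f : V2 → ℝ}, Continuous f → HasCompactSupport f →
      Integrable (fun x => f x * h x) μ := by
    intro f hf hcf
    obtain ⟨C, hC⟩ := hcf.exists_bound_of_continuous hf
    exact hh.bdd_mul (c := C) hf.aestronglyMeasurable (Eventually.of_forall hC)
  rw [← integral_sub (mulr c hc) (mulr c' hc'), ← integral_const_mul]
  refine (abs_integral_le_integral_abs).trans ?_
  refine integral_mono ((mulr c hc).sub (mulr c' hc')).abs (hh.abs.const_mul δ) fun x => ?_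
  show |φ x * h x - φ' x * h x| ≤ δ * |h x|
  rw [← sub_mul, abs_mul]
  gcongr
  rw [← Real.dist_eq, dist_comm]
  exact (hd x).le

lemma mnorm_entry {M : Mat2} (h : mnorm M = 1) (i j : Fin 2) : |M i j| ≤ 1 := by
  rw [mnorm, Real.sqrt_eq_one] at h
  rw [← sq_le_one_iff_abs_le_one]
  simp only [Fin.sum_univ_two] at h
  have key : M i j ^ 2 = M 0 0 ^ 2 ∨ M i j ^ 2 = M 0 1 ^ 2 ∨ M i j ^ 2 = M 1 0 ^ 2 ∨
      M i j ^ 2 = M 1 1 ^ 2 := by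
    fin_cases i <;> fin_cases j <;> simp
  rcases key with h' | h' | h' | h' <;> rw [h'] <;>
    nlinarith [sq_nonneg (M 0 0), sq_nonneg (M 0 1), sq_nonneg (M 1 0), sq_nonneg (M 1 1)]

lemma measConv_of {Ω : Set V2} {un : ℕ → V2 → V2} {gn : ℕ → V2 → Mat2} {u : V2 → V2}
    {gu : V2 → Mat2} {σ : Measure V2} {gs : V2 → Mat2} (hu : HasBVDerivOn Ω u gu σ gs)
    (hs : ∀ n, IsSobolev11On Ω (un n) (gn n)) {C : ℝ}
    (hC : ∀ n i j, ∫ x in Ω, |gn n x i j| ≤ C)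
    (hconv : ∀ w : V2 → ℝ, Continuous w → HasCompactSupport w → ∀ i,
      Tendsto (fun n => ∫ x in Ω, un n x i * w x) atTop (𝓝 (∫ x in Ω, u x i * w x))) :
    MeasConv Ω gn gu σ gs := by
  intro φ hφ hc ht i j
  have : IsFiniteMeasure σ := ⟨lt_top_iff_ne_top.2 hu.fin⟩
  have igs : Integrable (fun x => gs x i j) σ := by
    refine Integrable.of_bound (hu.meas_gs i j).aestronglyMeasurable 1 ?_
    filter_upwards [hu.unit] with x hx using mnorm_entry hx i j
  set T := (∫ x in Ω, |gu x i j|) + ∫ x, |gs x i j| ∂σ with hT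
  have hT0 : 0 ≤ T := add_nonneg (integral_nonneg fun _ => abs_nonneg _)
    (integral_nonneg fun _ => abs_nonneg _)
  have hC0 : 0 ≤ C := (integral_nonneg fun _ => abs_nonneg _).trans (hC 0 0 0)
  rw [Metric.tendsto_atTop]
  intro η hη
  set δ := η / (3 * (C + T + 1)) with hδ
  have hδ0 : 0 < δ := by positivity
  have hδ1 : δ * (C + T + 1) = η / 3 := by rw [hδ]; field_simp
  obtain ⟨φ', hφ', hd, hsupp⟩ := hφ.exists_contDiff_approx (⊤ : ℕ∞) (ε := fun _ => δ)
    continuous_const (fun _ => hδ0)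
  have ht' : tsupport φ' ⊆ tsupport φ := closure_mono hsupp
  have hc' : HasCompactSupport φ' := hc.mono' (hsupp.trans subset_closure)
  have hlim : Tendsto (fun n => ∫ x in Ω, φ' x * gn n x i j) atTop
      (𝓝 ((∫ x in Ω, φ' x * gu x i j) + ∫ x, φ' x * gs x i j ∂σ)) := by
    have h1 := (hconv (pd j φ') (pd_continuous hφ' j) (pd_support hc' j) i).neg
    have e1 := hu.ibp φ' hφ' hc' (ht'.trans ht) i j
    have e2 : -∫ x in Ω, u x i * pd j φ' x = 
        (∫ x in Ω, φ' x * gu x i j) + ∫ x, φ' x * gs x i j ∂σ := by rw [e1]; ring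
    rw [e2] at h1
    refine h1.congr fun n => ?_
    rw [(hs n).ibp φ' hφ' hc' (ht'.trans ht) i j, neg_neg]
  obtain ⟨N, hN⟩ := Metric.tendsto_atTop.1 hlim (η / 3) (by positivity)
  refine ⟨N, fun n hn => ?_⟩
  have q0 := hN n hn
  rw [Real.dist_eq] at q0 ⊢
  have q1 := int_diff_le ((hs n).int_gu i j) hφ hφ'.continuous hc hc' hd
  have q2 := int_diff_le (hu.int_gu i j) hφ hφ'.continuous hc hc' hd
  have q3 := int_diff_le igs hφ hφ'.continuous hc hc' hd
  have q1' : δ * (∫ x in Ω, |gn n x i j|) ≤ δ * C := by gcongr; exact hC n i j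
  have q4 : δ * T = δ * (∫ x in Ω, |gu x i j|) + δ * ∫ x, |gs x i j| ∂σ := by rw [hT]; ring
  have q5 : δ * (C + T + 1) = δ * C + δ * T + δ := by ring
  rw [abs_le] at q1 q2 q3
  rw [abs_lt] at q0 ⊢
  constructor <;> linarith [q0.1, q0.2, q1.1, q1.2, q2.1, q2.2, q3.1, q3.2]

/-! ### Consequences for functions of bounded variation -/

lemma slice_mem {Ω : Set V2} (ho : IsOpen Ω) (hb : Bornology.IsBounded Ω) :
    ∀ x ∈ Ω, x 1 ∈ Ioo (aOm Ω) (bOm Ω) := by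
  intro x hx
  set S := (fun x : V2 => x 1) '' Ω with hS
  obtain ⟨K, hK⟩ := hb.exists_norm_le
  have hKS : ∀ y ∈ S, |y| ≤ K := by
    rintro _ ⟨x, hx, rfl⟩
    exact (norm_le_pi_norm x 1).trans (hK x hx)
  have b1 : BddBelow S := ⟨-K, fun y hy => (abs_le.1 (hKS y hy)).1⟩
  have b2 : BddAbove S := ⟨K, fun y hy => (abs_le.1 (hKS y hy)).2⟩
  have hSo : IsOpen S := isOpenMap_eval 1 _ ho
  obtain ⟨δ, hδ, hball⟩ := Metric.isOpen_iff.1 hSo (x 1) ⟨x, hx, rfl⟩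
  have m1 : x 1 - δ / 2 ∈ S := hball (by
    rw [Metric.mem_ball, Real.dist_eq, abs_lt]; constructor <;> linarith)
  have m2 : x 1 + δ / 2 ∈ S := hball (by
    rw [Metric.mem_ball, Real.dist_eq, abs_lt]; constructor <;> linarith)
  constructor
  · have := csInf_le b1 m1
    unfold aOm; linarith
  · have := le_csSup b2 m2
    unfold bOm; linarith

lemma App_bdd {a b lam : ℝ} (hl : lam ∈ Ioo (0:ℝ) 1) (hab : a < b) {ε : ℕ → ℝ}
    (he : ∀ n, 0 < ε n) {g : ℝ → ℝ} (hg : BoundedVariationOn g (Ioo a b)) :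
    ∃ C : ℝ, ∀ n, ∀ t ∈ Ioo a b, |App a b lam (ε n) n g t| ≤ C := by
  set m := (a + b) / 2 with hm
  have hmm : m ∈ Ioo a b := ⟨by rw [hm]; linarith, by rw [hm]; linarith⟩
  set c := |g m| + (eVariationOn g (Ioo a b)).toReal with hc
  have hb : ∀ s ∈ Ioo a b, |g s| ≤ c := by
    intro s hs
    have := hg.dist_le hs hmm
    rw [Real.dist_eq] at this
    have h2 := abs_sub_abs_le_abs_sub (g s) (g m)
    rw [hc]; linarith
  refine ⟨c + c, fun n t ht => ?_⟩
  obtain ⟨s₁, s₂, -, -, h⟩ := App_approx hl (he n) ht n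
  have := h g 0
  simp only [sub_zero] at this
  exact this.trans (add_le_add (hb _ (tau_mem hab _ _)) (hb _ (tau_mem hab _ _)))

lemma App_conv {a b lam : ℝ} (hl : lam ∈ Ioo (0:ℝ) 1) {ε : ℕ → ℝ}
    (he : ∀ n, 0 < ε n) (he0 : Tendsto ε atTop (𝓝 0)) {g : ℝ → ℝ}
    (hg : BoundedVariationOn g (Ioo a b)) :
    ∀ᵐ t, t ∈ Ioo a b → Tendsto (fun n => App a b lam (ε n) n g t) atTop (𝓝 (g t)) := by
  filter_upwards [hg.locallyBoundedVariationOn.ae_differentiableWithinAt_of_mem_real] with t h ht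
  have hc : ContinuousAt g t := (h ht).continuousWithinAt.continuousAt (Ioo_mem_nhds ht.1 ht.2)
  choose s₁ s₂ hs₁ hs₂ hs using fun n => App_approx hl (he n) ht n
  have h2e : Tendsto (fun n => 2 * ε n) atTop (𝓝 0) := by simpa using he0.const_mul 2
  have lim : ∀ s : ℕ → ℝ, (∀ n, |s n - t| ≤ 2 * ε n) →
      Tendsto (fun n => |g (tau a b n (s n)) - g t|) atTop (𝓝 0) := by
    intro s hs
    have : Tendsto s atTop (𝓝 t) := by
      rw [tendsto_iff_dist_tendsto_zero]
      exact squeeze_zero (fun _ => dist_nonneg) (fun n => hs n) h2e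
    have := hc.tendsto.comp (tau_tendsto ht this)
    exact tendsto_iff_dist_tendsto_zero.1 this
  rw [tendsto_iff_dist_tendsto_zero]
  refine squeeze_zero (fun _ => dist_nonneg) (fun n => hs n g (g t)) ?_
  simpa using (lim s₁ hs₁).add (lim s₂ hs₂)

lemma App_L1 {a b lam K : ℝ} (hl : lam ∈ Ioo (0:ℝ) 1) (hab : a < b) {ε : ℕ → ℝ}
    (he : ∀ n, 0 < ε n) {g : ℝ → ℝ} (hg : BoundedVariationOn g (Ioo a b)) {Ω : Set V2}
    (hΩ : ∀ x ∈ Ω, x 1 ∈ Ioo a b ∧ |x 0| ≤ K) (hm : MeasurableSet Ω) :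
    ∃ C : ℝ, ∀ n, ∫ x in Ω, |deriv (App a b lam (ε n) n g) (x 1)| ≤ C := by
  refine ⟨(ENNReal.ofReal (2 * K) * eVariationOn g (Ioo a b)).toReal, fun n => ?_⟩
  rw [integral_eq_lintegral_of_nonneg_ae (Eventually.of_forall fun _ => abs_nonneg _)]
  · exact ENNReal.toReal_mono (ENNReal.mul_ne_top ENNReal.ofReal_ne_top hg)
      (App_lintegral hl (he n) hab n g hΩ hm)
  · exact ((measurable_deriv _).comp (measurable_pi_apply 1)).abs.aestronglyMeasurable

lemma sq_add_sq_le (a b : ℝ) : a ^ 2 + b ^ 2 ≤ (|a| + |b|) ^ 2 := by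
  have := abs_nonneg a
  have := abs_nonneg b
  nlinarith [sq_abs a, sq_abs b, mul_nonneg (abs_nonneg a) (abs_nonneg b)]

lemma proj_lip {ι : Type} [Fintype ι] (i : ι) :
    LipschitzWith 1 (fun x : EuclideanSpace ℝ ι => x i) := by
  refine LipschitzWith.of_dist_le_mul fun x y => ?_
  rw [dist_eq_norm, dist_eq_norm, NNReal.coe_one, one_mul]
  exact PiLp.norm_apply_le (x - y) i

lemma bv_m {R : ℝ → Mat2} {s : Set ℝ} (h : BVm R s) (i k : Fin 2) :
    BoundedVariationOn (fun t => R t i k) s := by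
  have := (proj_lip (i, k)).comp_boundedVariationOn h
  exact this

lemma bv_v {R : ℝ → V2} {s : Set ℝ} (h : BVv R s) (i : Fin 2) :
    BoundedVariationOn (fun t => R t i) s := by
  have := (proj_lip i).comp_boundedVariationOn h
  exact this

/-- Theorem 1.1, second part: attainability.
Every `u ∈ BV(Ω;ℝ²)` of the form `u(x) = R(x₂)x + ψ(x₂)` with `R ∈ BV(a_Ω,b_Ω;SO(2))`,
`ψ ∈ BV(a_Ω,b_Ω;ℝ²)` is the weak* limit in `BV(Ω;ℝ²)` of a sequence
`u_ε ∈ W^{1,1}(Ω;ℝ²)` with `∇u_ε ∈ SO(2)` a.e. in `εY_rig ∩ Ω`. -/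
theorem attainability_layered_BV
    (Ω : Set V2) (hΩlip : IsLipschitzDomain Ω) (hΩx1 : X1Connected Ω)
    (lam : ℝ) (hlam : lam ∈ Ioo (0:ℝ) 1)
    (ε : ℕ → ℝ) (hεpos : ∀ n, 0 < ε n) (hε0 : Tendsto ε atTop (𝓝 0))
    (u : V2 → V2) (gu : V2 → Mat2) (σ : Measure V2) (gs : V2 → Mat2)
    (hu : HasBVDerivOn Ω u gu σ gs)
    (R : ℝ → Mat2) (ψ : ℝ → V2)
    (hRSO2 : ∀ t ∈ Ioo (aOm Ω) (bOm Ω), R t ∈ SO2)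
    (hRbv : BVm R (Ioo (aOm Ω) (bOm Ω))) (hψbv : BVv ψ (Ioo (aOm Ω) (bOm Ω)))
    (hform : ∀ᵐ x ∂(volume.restrict Ω), u x = (R (x 1)).mulVec x + ψ (x 1)) :
    ∃ un : ℕ → V2 → V2, ∃ gn : ℕ → V2 → Mat2,
      (∀ n, IsSobolev11On Ω (un n) (gn n)) ∧
      (∀ n, ∀ᵐ x ∂(volume.restrict (Ω ∩ rigid2 lam (ε n))), gn n x ∈ SO2) ∧
      L1ConvOn Ω un u ∧ MeasConv Ω gn gu σ gs := by
  obtain ⟨hopen, hne, hbd, -⟩ := hΩlip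
  set a := aOm Ω with ha
  set b := bOm Ω with hb
  obtain ⟨K, hK0, hK⟩ : ∃ K : ℝ, 0 ≤ K ∧ ∀ x ∈ Ω, ∀ k, |x k| ≤ K := by
    obtain ⟨K, hK⟩ := hbd.exists_norm_le
    obtain ⟨x, hx⟩ := hne
    exact ⟨K, (norm_nonneg x).trans (hK x hx), fun x hx k => (norm_le_pi_norm x k).trans (hK x hx)⟩
  have hΩab : ∀ x ∈ Ω, x 1 ∈ Ioo a b := slice_mem hopen hbd
  have hab : a < b := by
    obtain ⟨x, hx⟩ := hne
    exact (hΩab x hx).1.trans (hΩab x hx).2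
  have hm : MeasurableSet Ω := hopen.measurableSet
  have hfin : volume Ω ≠ ⊤ := hbd.measure_lt_top.ne
  have : IsFiniteMeasure (volume.restrict Ω) := ⟨by simpa using hfin.lt_top⟩
  -- components
  have bvR := bv_m hRbv
  have bvψ := bv_v hψbv
  set A : ℕ → Fin 2 → Fin 2 → ℝ → ℝ := fun n i k => App a b lam (ε n) n (fun t => R t i k) with hA
  set B : ℕ → Fin 2 → ℝ → ℝ := fun n i => App a b lam (ε n) n (fun t => ψ t i) with hB
  have lipA : ∀ n i k, ∃ K, LipschitzWith K (A n i k) := fun n i k => App_lip _ _ _ _ _ _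
  have lipB : ∀ n i, ∃ K, LipschitzWith K (B n i) := fun n i => App_lip _ _ _ _ _ _
  have hsob : ∀ n, IsSobolev11On Ω (U2 (A n) (B n)) (G2 (A n) (B n)) :=
    fun n => sob_layer (lipA n) (lipB n) hbd
  -- uniform bounds
  obtain ⟨C, hC0, hCA, hCB⟩ : ∃ C : ℝ, 0 ≤ C ∧ (∀ n i k, ∀ t ∈ Ioo a b, |A n i k t| ≤ C) ∧
      (∀ n i, ∀ t ∈ Ioo a b, |B n i t| ≤ C) := by
    choose c1 hc1 using fun i k => App_bdd hlam hab hεpos (bvR i k)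
    choose c2 hc2 using fun i => App_bdd hlam hab hεpos (bvψ i)
    obtain ⟨M1, hM1⟩ := Finite.exists_le (fun p : Fin 2 × Fin 2 => c1 p.1 p.2)
    obtain ⟨M2, hM2⟩ := Finite.exists_le c2
    refine ⟨max 0 (max M1 M2), le_max_left _ _, fun n i k t ht => ?_, fun n i t ht => ?_⟩
    · exact (hc1 i k n t ht).trans ((hM1 (i, k)).trans ((le_max_left _ _).trans (le_max_right _ _)))
    · exact (hc2 i n t ht).trans ((hM2 i).trans ((le_max_right _ _).trans (le_max_right _ _)))
  obtain ⟨V, hV0, hVA, hVB⟩ : ∃ V : ℝ, 0 ≤ V ∧ (∀ n i k, ∫ x in Ω, |deriv (A n i k) (x 1)| ≤ V) ∧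
      (∀ n i, ∫ x in Ω, |deriv (B n i) (x 1)| ≤ V) := by
    have hΩ' : ∀ x ∈ Ω, x 1 ∈ Ioo a b ∧ |x 0| ≤ K := fun x hx => ⟨hΩab x hx, hK x hx 0⟩
    choose c1 hc1 using fun i k => App_L1 hlam hab hεpos (bvR i k) hΩ' hm
    choose c2 hc2 using fun i => App_L1 hlam hab hεpos (bvψ i) hΩ' hm
    obtain ⟨M1, hM1⟩ := Finite.exists_le (fun p : Fin 2 × Fin 2 => c1 p.1 p.2)
    obtain ⟨M2, hM2⟩ := Finite.exists_le c2
    refine ⟨max 0 (max M1 M2), le_max_left _ _, fun n i k => ?_, fun n i => ?_⟩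
    · exact (hc1 i k n).trans ((hM1 (i, k)).trans ((le_max_left _ _).trans (le_max_right _ _)))
    · exact (hc2 i n).trans ((hM2 i).trans ((le_max_right _ _).trans (le_max_right _ _)))
  -- pointwise convergence
  have hpt : ∀ᵐ x ∂(volume.restrict Ω), ∀ i,
      Tendsto (fun n => U2 (A n) (B n) x i) atTop (𝓝 (u x i)) := by
    have hev : Tendsto (fun x : V2 => x 1) (ae volume) (ae volume) :=
      (Measure.quasiMeasurePreserving_eval (fun _ : Fin 2 => (volume : Measure ℝ)) 1).tendsto_ae
    have t1 : ∀ᵐ x ∂(volume : Measure V2), ∀ i k, x 1 ∈ Ioo a b →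
        Tendsto (fun n => A n i k (x 1)) atTop (𝓝 (R (x 1) i k)) := by
      rw [ae_all_iff]; intro i
      rw [ae_all_iff]; intro k
      exact hev (App_conv hlam hεpos hε0 (bvR i k))
    have t2 : ∀ᵐ x ∂(volume : Measure V2), ∀ i, x 1 ∈ Ioo a b →
        Tendsto (fun n => B n i (x 1)) atTop (𝓝 (ψ (x 1) i)) := by
      rw [ae_all_iff]; intro i
      exact hev (App_conv hlam hεpos hε0 (bvψ i))
    filter_upwards [ae_restrict_of_ae t1, ae_restrict_of_ae t2, hform, ae_restrict_mem hm]
      with x h1 h2 h3 hx i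
    have hx1 := hΩab x hx
    rw [h3]
    have : ((R (x 1)).mulVec x + ψ (x 1)) i = 
        R (x 1) i 0 * x 0 + R (x 1) i 1 * x 1 + ψ (x 1) i := by
      fin_cases i <;> simp
    rw [this]
    exact (((h1 i 0 hx1).mul_const _).add ((h1 i 1 hx1).mul_const _)).add (h2 i hx1)
  set D := C * K + C * K + C with hD
  have hUb : ∀ n, ∀ x ∈ Ω, ∀ i, |U2 (A n) (B n) x i| ≤ D := by
    intro n x hx i
    have hx1 := hΩab x hx
    have k1 : |A n i 0 (x 1) * x 0| ≤ C * K := by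
      rw [abs_mul]; exact mul_le_mul (hCA n i 0 _ hx1) (hK x hx 0) (abs_nonneg _) hC0
    have k2 : |A n i 1 (x 1) * x 1| ≤ C * K := by
      rw [abs_mul]; exact mul_le_mul (hCA n i 1 _ hx1) (hK x hx 1) (abs_nonneg _) hC0
    have k3 := hCB n i _ hx1
    exact (abs_add_le _ _).trans (add_le_add ((abs_add_le _ _).trans (add_le_add k1 k2)) k3)
  have hub : ∀ᵐ x ∂(volume.restrict Ω), ∀ i, |u x i| ≤ D := by
    filter_upwards [hpt, ae_restrict_mem hm] with x h hx i
    exact le_of_tendsto' (h i).abs fun n => hUb n x hx i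
  have hUm : ∀ n, AEStronglyMeasurable (U2 (A n) (B n)) (volume.restrict Ω) :=
    fun n => (hsob n).int_u.aestronglyMeasurable
  have hum : AEStronglyMeasurable u (volume.restrict Ω) := hu.int_u.aestronglyMeasurable
  refine ⟨fun n => U2 (A n) (B n), fun n => G2 (A n) (B n), hsob, ?_, ?_, ?_⟩
  · intro n
    have hmr : MeasurableSet (rigid2 lam (ε n)) := by
      have : Measurable (fun x : V2 => Int.fract (x 1 / ε n)) :=
        measurable_fract.comp ((measurable_pi_apply 1).div_const _)
      exact this measurableSet_Ici
    filter_upwards [ae_restrict_mem (hm.inter hmr)] with x hx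
    obtain ⟨s, hs⟩ := App_rigid hlam (hεpos n) (hΩab x hx.1) n hx.2
    have : G2 (A n) (B n) x = R (tau a b n s) := by
      ext i j
      have e0 := hs (fun t => R t i j)
      have e1 := hs (fun t => R t i 0)
      have e2 := hs (fun t => R t i 1)
      have e3 := hs (fun t => ψ t i)
      simp only [G2, Matrix.of_apply, hA, hB]
      rw [e0.1, e1.2, e2.2, e3.2]
      simp
    rw [this]
    exact hRSO2 _ (tau_mem hab _ _)
  · have hvc : Continuous vnorm := by unfold vnorm; fun_prop
    have := tendsto_integral_of_dominated_convergence (μ := volume.restrict Ω)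
      (F := fun n x => vnorm (U2 (A n) (B n) x - u x)) (f := fun _ => 0) (fun _ => 4 * D)
      (fun n => hvc.comp_aestronglyMeasurable ((hUm n).sub hum))
      (integrable_const _) ?_ ?_
    · simpa [L1ConvOn] using this
    · intro n
      filter_upwards [hub, ae_restrict_mem hm] with x h hx
      have h0 := hUb n x hx 0
      have h1 := hUb n x hx 1
      have h0' := h 0
      have h1' := h 1
      rw [Real.norm_eq_abs, vnorm, abs_of_nonneg (Real.sqrt_nonneg _)]
      refine (Real.sqrt_le_sqrt (sq_add_sq_le _ _)).trans ?_
      rw [Real.sqrt_sq (by positivity)]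
      have j0 := abs_sub (U2 (A n) (B n) x 0) (u x 0)
      have j1 := abs_sub (U2 (A n) (B n) x 1) (u x 1)
      simp only [Pi.sub_apply]
      linarith
    · filter_upwards [hpt] with x h
      have : Tendsto (fun n => U2 (A n) (B n) x - u x) atTop (𝓝 0) := by
        rw [tendsto_pi_nhds]
        intro i
        simpa using (h i).sub_const (u x i)
      have := (hvc.tendsto 0).comp this
      have h0 : vnorm 0 = 0 := by simp [vnorm]
      rw [h0] at this
      exact this
  · refine measConv_of (C := C * (volume Ω).toReal + (K * V + K * V + V)) hu hsob ?_ ?_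
    · intro n i j
      have c1 : Continuous (fun _ : V2 => (1:ℝ)) := continuous_const
      have dA : ∀ k, IntegrableOn (fun x : V2 => |deriv (A n i k) (x 1)|) Ω volume := fun k => by
        obtain ⟨L, hL⟩ := lipA n i k
        have h := (lip_deriv_int hL hbd c1).abs
        simp only [mul_one] at h
        exact h
      have dB : IntegrableOn (fun x : V2 => |deriv (B n i) (x 1)|) Ω volume := by
        obtain ⟨L, hL⟩ := lipB n i
        have h := (lip_deriv_int hL hbd c1).abs
        simp only [mul_one] at h
        exact h
      have ic : Integrable (fun _ : V2 => C) (volume.restrict Ω) := integrable_const _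
      have i1 := ((dA 0).const_mul K).fun_add ((dA 1).const_mul K)
      have i2 := i1.fun_add dB
      calc ∫ x in Ω, |G2 (A n) (B n) x i j| 
          ≤ ∫ x in Ω, (C + (K * |deriv (A n i 0) (x 1)| + K * |deriv (A n i 1) (x 1)| + 
              |deriv (B n i) (x 1)|)) := by
            refine setIntegral_mono_on ((hsob n).int_gu i j).abs (ic.fun_add i2) hm fun x hx => ?_
            have k0 := hCA n i j _ (hΩab x hx)
            have k1 : |deriv (A n i 0) (x 1) * x 0| ≤ K * |deriv (A n i 0) (x 1)| := by
              rw [abs_mul, mul_comm]; gcongr; exact hK x hx 0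
            have k2 : |deriv (A n i 1) (x 1) * x 1| ≤ K * |deriv (A n i 1) (x 1)| := by
              rw [abs_mul, mul_comm]; gcongr; exact hK x hx 1
            simp only [G2, Matrix.of_apply]
            refine (abs_add_le _ _).trans (add_le_add k0 ?_)
            split_ifs
            · refine (abs_add_le _ _).trans (add_le_add ?_ le_rfl)
              exact (abs_add_le _ _).trans (add_le_add k1 k2)
            · rw [abs_zero]; positivity
        _ = C * (volume Ω).toReal + (K * (∫ x in Ω, |deriv (A n i 0) (x 1)|) + 
              K * (∫ x in Ω, |deriv (A n i 1) (x 1)|) + ∫ x in Ω, |deriv (B n i) (x 1)|) := by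
            rw [integral_add ic i2, integral_add i1 dB, 
              integral_add ((dA 0).const_mul K) ((dA 1).const_mul K), integral_const_mul,
              integral_const_mul]
            simp [Measure.real, mul_comm]
        _ ≤ _ := by
            gcongr
            · exact hVA n i 0
            · exact hVA n i 1
            · exact hVB n i
    · intro w hw hcw i
      obtain ⟨W, hW⟩ := hcw.exists_bound_of_continuous hw
      refine tendsto_integral_of_dominated_convergence (fun _ => D * W) ?_ (integrable_const _) ?_ ?_
      · intro n
        exact ((continuous_apply i).comp_aestronglyMeasurable (hUm n)).mul hw.aestronglyMeasurable
      · intro n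
        filter_upwards [ae_restrict_mem hm] with x hx
        rw [norm_mul]
        exact mul_le_mul (hUb n x hx i) (hW x) (norm_nonneg _) (by positivity)
      · filter_upwards [hpt] with x h
        exact (h i).mul_const _
end
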